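/- arXiv:2509.21581 — 2 statements merged into one kernel-verified Lean document; each statement's English description precedes it below -/
import Mathlib

section
/- Let β be a real number and let f₊ : ℝ² → ℂ be the function f₊(ρ) = (1−i)·e^{β/2}·exp(−iπ‖ρ‖²) − (1+i)·e^{−β/2}·exp(iπ‖ρ‖²). Then for every ρ' ∈ ℝ², the Gaussian-regularized value of K_β[f₊](ρ') equals i·e^β·f₊(ρ'). In other words, f₊ is an eigenfunction of the hyperbolic fractional Fourier transformation of the second kind K_β with eigenvalue i·e^β. -/
open MeasureTheory Filter
open scoped RealInnerProductSpace

noncomputable section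

/-- The Euclidean plane `ℝ²`. -/
abbrev Plane := EuclideanSpace ℝ (Fin 2)

/-- Gaussian-regularized hyperbolic fractional Fourier transformation of the second kind:
the integrand carries the extra factor `exp (-π ε ‖ρ‖²)`. -/
def fracKreg (β ε : ℝ) (f : Plane → ℂ) (ρ' : Plane) : ℂ :=
  Complex.I * Real.exp β / Real.cosh β *
    Complex.exp (Complex.I * Real.pi * ‖ρ'‖ ^ 2 * Real.tanh β) *
    ∫ ρ : Plane,
      Complex.exp (-(Real.pi * ε * ‖ρ‖ ^ 2 : ℝ)) *
      Complex.exp (-(Complex.I * Real.pi * ‖ρ‖ ^ 2 * Real.tanh β)) *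
      Complex.exp (2 * Real.pi * Complex.I * ⟪ρ', ρ⟫ / Real.cosh β) * f ρ

/-!
For `0 ≤ re z`, the regularized transformation `K_β` maps the Gaussian `exp (-πz‖ρ‖²)` in the limit
to a multiple of the Gaussian whose parameter is the Möbius image
`(cosh β - i z sinh β) / (z cosh β + i sinh β)` of `z`. This Möbius map exchanges `i` and `-i`, so
`K_β` acts on the span of the two chirps `exp (∓iπ‖ρ‖²)` by an antidiagonal matrix with square
`-e^(2β)`, and `f₊` is its eigenvector for the square root `i e^β`.
-/

lemma mem_slitPlane_of_re_nonneg {z : ℂ} (hz : 0 ≤ z.re) (hz₀ : z ≠ 0) :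
    z ∈ Complex.slitPlane := by
  refine Complex.mem_slitPlane_iff.mpr (or_iff_not_imp_left.mpr fun hre him => hz₀ ?_)
  exact Complex.ext (le_antisymm (not_lt.mp hre) hz) him

lemma re_add_I_mul_ofReal (z : ℂ) (t : ℝ) : (z + Complex.I * t).re = z.re := by
  rw [Complex.add_re, Complex.I_mul_re, Complex.ofReal_im, neg_zero, add_zero]

lemma re_pi_mul_ofReal_add_pos {b : ℂ} {ε : ℝ} (hb : 0 ≤ b.re) (hε : 0 < ε) :
    0 < (Real.pi * (ε + b)).re := by
  rw [Complex.re_ofReal_mul, Complex.add_re, Complex.ofReal_re]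
  positivity

lemma tendsto_pi_mul_ofReal_add {b : ℂ} (hb : 0 ≤ b.re) :
    Tendsto (fun ε : ℝ => Real.pi * (ε + b)) (nhdsWithin 0 (Set.Ioi 0))
      (nhdsWithin (Real.pi * b) {b' | 0 < b'.re}) := by
  refine tendsto_nhdsWithin_iff.mpr ⟨?_, ?_⟩
  · have hcont : Continuous fun ε : ℝ => Real.pi * (ε + b) := by fun_prop
    simpa only [Complex.ofReal_zero, zero_add] using
      (hcont.tendsto 0).mono_left nhdsWithin_le_nhds
  · filter_upwards [self_mem_nhdsWithin] with ε hε using re_pi_mul_ofReal_add_pos hb hε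

lemma tendsto_integral_cexp_neg_mul_sq_norm_add {V : Type*} [NormedAddCommGroup V]
    [InnerProductSpace ℝ V] [FiniteDimensional ℝ V] [MeasurableSpace V] [BorelSpace V]
    {b : ℂ} (hb : 0 ≤ b.re) (hb₀ : b ≠ 0) (c : ℂ) (w : V) :
    Tendsto (fun b' : ℂ => ∫ v : V, Complex.exp (-b' * ‖v‖ ^ 2 + c * ⟪w, v⟫))
      (nhdsWithin b {b' | 0 < b'.re})
      (nhds ((Real.pi / b) ^ (Module.finrank ℝ V / 2 : ℂ) *
        Complex.exp (c ^ 2 * ‖w‖ ^ 2 / (4 * b)))) := by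
  have hslit : Real.pi / b ∈ Complex.slitPlane := by
    refine mem_slitPlane_of_re_nonneg ?_
      (div_ne_zero (Complex.ofReal_ne_zero.mpr Real.pi_ne_zero) hb₀)
    rw [div_eq_mul_inv, Complex.re_ofReal_mul, Complex.inv_re]
    exact mul_nonneg Real.pi_pos.le (div_nonneg hb (Complex.normSq_nonneg b))
  have hcont : ContinuousAt (fun b' : ℂ => (Real.pi / b') ^ (Module.finrank ℝ V / 2 : ℂ) *
      Complex.exp (c ^ 2 * ‖w‖ ^ 2 / (4 * b'))) b := by
    have h4b : 4 * b ≠ 0 := mul_ne_zero (by norm_num) hb₀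
    fun_prop (disch := assumption)
  refine (hcont.tendsto.mono_left nhdsWithin_le_nhds).congr' ?_
  filter_upwards [self_mem_nhdsWithin] with b' hb'
  exact (GaussianFourier.integral_cexp_neg_mul_sq_norm_add hb' c w).symm

/-- The Gaussian `exp (-πz‖v‖²)` with complex parameter `z`. For `z = ±i` it is the chirp
`exp (∓iπ‖v‖²)`. -/
def complexGaussian {V : Type*} [Norm V] (z : ℂ) (v : V) : ℂ :=
  Complex.exp (-(Real.pi * z * ‖v‖ ^ 2))

/-- The kernel of the regularized transformation `fracKreg`, as a function of the integration
variable `ρ`, without the prefactor that depends on `ρ'` only. -/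
def fracKernel (β ε : ℝ) (ρ' ρ : Plane) : ℂ :=
  Complex.exp (-(Real.pi * ε * ‖ρ‖ ^ 2 : ℝ)) *
    Complex.exp (-(Complex.I * Real.pi * ‖ρ‖ ^ 2 * Real.tanh β)) *
    Complex.exp (2 * Real.pi * Complex.I * ⟪ρ', ρ⟫ / Real.cosh β)

lemma fracKreg_eq_mul_integral_fracKernel (β ε : ℝ) (f : Plane → ℂ) (ρ' : Plane) :
    fracKreg β ε f ρ' = Complex.I * Real.exp β / Real.cosh β *
      Complex.exp (Complex.I * Real.pi * ‖ρ'‖ ^ 2 * Real.tanh β) *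
      ∫ ρ, fracKernel β ε ρ' ρ * f ρ :=
  rfl

lemma fracKreg_const_mul (β ε : ℝ) (a : ℂ) (f : Plane → ℂ) (ρ' : Plane) :
    fracKreg β ε (fun ρ => a * f ρ) ρ' = a * fracKreg β ε f ρ' := by
  simp only [fracKreg_eq_mul_integral_fracKernel, mul_left_comm _ a, integral_const_mul]

lemma fracKreg_sub {β ε : ℝ} {f g : Plane → ℂ} {ρ' : Plane}
    (hf : Integrable fun ρ => fracKernel β ε ρ' ρ * f ρ)
    (hg : Integrable fun ρ => fracKernel β ε ρ' ρ * g ρ) :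
    fracKreg β ε (fun ρ => f ρ - g ρ) ρ' = fracKreg β ε f ρ' - fracKreg β ε g ρ' := by
  simp only [fracKreg_eq_mul_integral_fracKernel, mul_sub, integral_sub hf hg]

lemma fracKernel_mul_complexGaussian (β ε : ℝ) (z : ℂ) (ρ' ρ : Plane) :
    fracKernel β ε ρ' ρ * complexGaussian z ρ =
      Complex.exp (-(Real.pi * (ε + (z + Complex.I * Real.tanh β))) * ‖ρ‖ ^ 2 +
        2 * Real.pi * Complex.I / Real.cosh β * ⟪ρ', ρ⟫) := by
  rw [fracKernel, complexGaussian, ← Complex.exp_add, ← Complex.exp_add, ← Complex.exp_add]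
  congr 1
  push_cast
  ring

lemma integrable_fracKernel_mul_complexGaussian {z : ℂ} {ε : ℝ} (hz : 0 ≤ z.re) (hε : 0 < ε)
    (β : ℝ) (ρ' : Plane) :
    Integrable fun ρ => fracKernel β ε ρ' ρ * complexGaussian z ρ := by
  simp only [fracKernel_mul_complexGaussian]
  exact GaussianFourier.integrable_cexp_neg_mul_sq_norm_add
    (re_pi_mul_ofReal_add_pos ((re_add_I_mul_ofReal z _).symm ▸ hz) hε) _ ρ'

lemma tendsto_integral_fracKernel_mul_complexGaussian {β : ℝ} {z : ℂ} (hz : 0 ≤ z.re)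
    (hzβ : z + Complex.I * Real.tanh β ≠ 0) (ρ' : Plane) :
    Tendsto (fun ε : ℝ => ∫ ρ, fracKernel β ε ρ' ρ * complexGaussian z ρ)
      (nhdsWithin 0 (Set.Ioi 0))
      (nhds (1 / (z + Complex.I * Real.tanh β) * complexGaussian
        (1 / (Real.cosh β ^ 2 * (z + Complex.I * Real.tanh β))) ρ')) := by
  have hπ : (Real.pi : ℂ) ≠ 0 := Complex.ofReal_ne_zero.mpr Real.pi_ne_zero
  have hcosh : (Real.cosh β : ℂ) ≠ 0 := Complex.ofReal_ne_zero.mpr (Real.cosh_pos β).ne'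
  simp only [fracKernel_mul_complexGaussian]
  rw [← re_add_I_mul_ofReal z (Real.tanh β)] at hz
  generalize z + Complex.I * Real.tanh β = b at hz hzβ ⊢
  have hre : 0 ≤ (Real.pi * b).re := by
    rw [Complex.re_ofReal_mul]
    positivity
  have hexponent : (2 * Real.pi * Complex.I / Real.cosh β) ^ 2 * ‖ρ'‖ ^ 2 / (4 * (Real.pi * b)) =
      -(Real.pi * (1 / (Real.cosh β ^ 2 * b)) * ‖ρ'‖ ^ 2) := by
    field_simp
    rw [Complex.I_sq]
    ring
  have hlim := (tendsto_integral_cexp_neg_mul_sq_norm_add hre (mul_ne_zero hπ hzβ)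
    (2 * Real.pi * Complex.I / Real.cosh β) ρ').comp (tendsto_pi_mul_ofReal_add hz)
  rwa [finrank_euclideanSpace_fin, Nat.cast_ofNat, div_self two_ne_zero, Complex.cpow_one,
    div_mul_cancel_left₀ hπ, inv_eq_one_div, hexponent] at hlim

lemma tendsto_fracKreg_complexGaussian {β : ℝ} {z : ℂ} (hz : 0 ≤ z.re)
    (hzβ : z * Real.cosh β + Complex.I * Real.sinh β ≠ 0) (ρ' : Plane) :
    Tendsto (fun ε : ℝ => fracKreg β ε (complexGaussian z) ρ') (nhdsWithin 0 (Set.Ioi 0))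
      (nhds (Complex.I * Real.exp β / (z * Real.cosh β + Complex.I * Real.sinh β) *
        complexGaussian ((Real.cosh β - Complex.I * z * Real.sinh β) /
          (z * Real.cosh β + Complex.I * Real.sinh β)) ρ')) := by
  have hcosh : (Real.cosh β : ℂ) ≠ 0 := Complex.ofReal_ne_zero.mpr (Real.cosh_pos β).ne'
  have hcosh_sq : (Real.cosh β : ℂ) ^ 2 = Real.sinh β ^ 2 + 1 := by
    exact_mod_cast Real.cosh_sq β
  have htanh : (Real.tanh β : ℂ) = Real.sinh β / Real.cosh β := by
    rw [Real.tanh_eq_sinh_div_cosh, Complex.ofReal_div]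
  set d : ℂ := z * Real.cosh β + Complex.I * Real.sinh β with hd
  have hparam : z + Complex.I * Real.tanh β = d / Real.cosh β := by
    rw [htanh, hd]
    field_simp
  have hmoebius : (Real.cosh β - Complex.I * z * Real.sinh β) / d =
      1 / (Real.cosh β ^ 2 * (d / Real.cosh β)) - Complex.I * Real.tanh β := by
    rw [htanh]
    field_simp
    linear_combination Complex.I * Real.sinh β * hd + hcosh_sq +
      (Real.sinh β : ℂ) ^ 2 * Complex.I_sq
  have hlim := (tendsto_integral_fracKernel_mul_complexGaussian hz
    (hparam ▸ div_ne_zero hzβ hcosh) ρ').const_mul (Complex.I * Real.exp β / Real.cosh β *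
      Complex.exp (Complex.I * Real.pi * ‖ρ'‖ ^ 2 * Real.tanh β))
  simp only [fracKreg_eq_mul_integral_fracKernel]
  convert hlim using 2
  rw [hparam, hmoebius, mul_mul_mul_comm, complexGaussian, complexGaussian, ← Complex.exp_add]
  congr 2
  · field_simp
  · ring

lemma tendsto_fracKreg_complexGaussian_I (β : ℝ) (ρ' : Plane) :
    Tendsto (fun ε : ℝ => fracKreg β ε (complexGaussian Complex.I) ρ')
      (nhdsWithin 0 (Set.Ioi 0)) (nhds (complexGaussian (-Complex.I) ρ')) := by
  have hexp : (Real.exp β : ℂ) ≠ 0 := Complex.ofReal_ne_zero.mpr (Real.exp_ne_zero β)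
  have hnum : (Real.cosh β - Complex.I * Complex.I * Real.sinh β : ℂ) = Real.exp β := by
    rw [Complex.I_mul_I, ← Real.cosh_add_sinh, Complex.ofReal_add]
    ring
  have hden : (Complex.I * Real.cosh β + Complex.I * Real.sinh β : ℂ) =
      Complex.I * Real.exp β := by
    rw [← mul_add, ← Complex.ofReal_add, Real.cosh_add_sinh]
  have hden₀ := mul_ne_zero Complex.I_ne_zero hexp
  have hlim := tendsto_fracKreg_complexGaussian (β := β) Complex.I_re.ge (hden ▸ hden₀) ρ'
  rwa [hnum, hden, div_self hden₀, one_mul, div_mul_cancel_right₀ hexp, Complex.inv_I] at hlim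

lemma tendsto_fracKreg_complexGaussian_neg_I (β : ℝ) (ρ' : Plane) :
    Tendsto (fun ε : ℝ => fracKreg β ε (complexGaussian (-Complex.I)) ρ')
      (nhdsWithin 0 (Set.Ioi 0)) (nhds (-Real.exp β ^ 2 * complexGaussian Complex.I ρ')) := by
  have hexp : (Real.exp (-β) : ℂ) ≠ 0 := Complex.ofReal_ne_zero.mpr (Real.exp_ne_zero (-β))
  have hnum : (Real.cosh β - Complex.I * -Complex.I * Real.sinh β : ℂ) = Real.exp (-β) := by
    rw [mul_neg, Complex.I_mul_I, ← Real.cosh_sub_sinh, Complex.ofReal_sub]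
    ring
  have hden : (-Complex.I * Real.cosh β + Complex.I * Real.sinh β : ℂ) =
      -Complex.I * Real.exp (-β) := by
    rw [← Real.cosh_sub_sinh, Complex.ofReal_sub]
    ring
  have hden₀ := mul_ne_zero (neg_ne_zero.mpr Complex.I_ne_zero) hexp
  have hamp : Complex.I * Real.exp β / (-Complex.I * Real.exp (-β)) = -(Real.exp β : ℂ) ^ 2 := by
    rw [Real.exp_neg, Complex.ofReal_inv]
    field_simp
  have hlim := tendsto_fracKreg_complexGaussian (z := -Complex.I) (β := β) (by simp)
    (hden ▸ hden₀) ρ'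
  rwa [hnum, hden, hamp, div_mul_cancel_right₀ hexp, inv_neg, Complex.inv_I, neg_neg] at hlim

lemma tendsto_fracKreg_complexGaussian_sub (a b : ℂ) (β : ℝ) (ρ' : Plane) :
    Tendsto (fun ε : ℝ => fracKreg β ε
        (fun ρ => a * complexGaussian Complex.I ρ - b * complexGaussian (-Complex.I) ρ) ρ')
      (nhdsWithin 0 (Set.Ioi 0))
      (nhds (a * complexGaussian (-Complex.I) ρ' -
        b * (-Real.exp β ^ 2 * complexGaussian Complex.I ρ'))) := by
  refine (((tendsto_fracKreg_complexGaussian_I β ρ').const_mul a).sub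
    ((tendsto_fracKreg_complexGaussian_neg_I β ρ').const_mul b)).congr' ?_
  filter_upwards [self_mem_nhdsWithin] with ε hε
  have hint (c z : ℂ) (hz : 0 ≤ z.re) :
      Integrable fun ρ => fracKernel β ε ρ' ρ * (c * complexGaussian z ρ) := by
    simpa only [mul_left_comm _ c] using
      (integrable_fracKernel_mul_complexGaussian hz hε β ρ').const_mul c
  rw [fracKreg_sub (hint a _ (by simp)) (hint b _ (by simp)), fracKreg_const_mul,
    fracKreg_const_mul]

/-- `f₊ = (1−i)e^(β/2)·g − (1+i)e^(−β/2)·h` is an eigenfunction of `K_β`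
(Gaussian-regularized) with eigenvalue `i·e^β`. -/
theorem stmt7 (β : ℝ)
    (fp : Plane → ℂ)
    (hfp : ∀ ρ, fp ρ =
      (1 - Complex.I) * Real.exp (β / 2) * Complex.exp (-(Complex.I * Real.pi * ‖ρ‖ ^ 2)) -
      (1 + Complex.I) * Real.exp (-β / 2) * Complex.exp (Complex.I * Real.pi * ‖ρ‖ ^ 2))
    (ρ' : Plane) :
    Tendsto (fun ε : ℝ => fracKreg β ε fp ρ')
      (nhdsWithin 0 (Set.Ioi 0)) (nhds (Complex.I * Real.exp β * fp ρ')) := by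
  have hfp_gaussian : fp = fun ρ =>
      (1 - Complex.I) * Real.exp (β / 2) * complexGaussian Complex.I ρ -
      (1 + Complex.I) * Real.exp (-β / 2) * complexGaussian (-Complex.I) ρ := by
    funext ρ
    simp only [hfp, complexGaussian, mul_neg, neg_mul, neg_neg, mul_comm Complex.I]
  have hhalf : (Real.exp β * Real.exp (-β / 2) : ℂ) = Real.exp (β / 2) := by
    rw [← Complex.ofReal_mul, ← Real.exp_add]
    ring_nf
  have hcoeff_I : Complex.I * Real.exp β * ((1 - Complex.I) * Real.exp (β / 2)) =
      (1 + Complex.I) * Real.exp (-β / 2) * Real.exp β ^ 2 := by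
    linear_combination
      -(1 + Complex.I) * Real.exp β * hhalf - Real.exp β * Real.exp (β / 2) * Complex.I_sq
  have hcoeff_neg_I : Complex.I * Real.exp β * ((1 + Complex.I) * Real.exp (-β / 2)) =
      -((1 - Complex.I) * Real.exp (β / 2)) := by
    linear_combination
      Complex.I * (1 + Complex.I) * hhalf + Real.exp (β / 2) * Complex.I_sq
  rw [hfp_gaussian]
  convert tendsto_fracKreg_complexGaussian_sub _ _ β ρ' using 2
  linear_combination
    complexGaussian Complex.I ρ' * hcoeff_I - complexGaussian (-Complex.I) ρ' * hcoeff_neg_I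

end
end

section
/- Let β be a nonzero real number, let β' be a real number, and let f ∈ 𝓢(ℝ², ℂ). Then for every ρ'' ∈ ℝ², K_{β'}[H_β[f]](ρ'') = K_{β'+β}[f](ρ''), where the outer transformation K_{β'} is applied to the function ρ' ↦ H_β[f](ρ'). That is, K_{β'} ∘ H_β = K_{β'+β}. -/
open MeasureTheory Filter
open scoped RealInnerProductSpace

noncomputable section

/-- Hyperbolic fractional-order Fourier transformation of the first kind of order `β`
(for `β ≠ 0`), with `coth β = cosh β / sinh β`. -/
def fracH (β : ℝ) (f : Plane → ℂ) (ρ' : Plane) : ℂ :=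
  Complex.I * Real.exp β / Real.sinh β *
    Complex.exp (-(Complex.I * Real.pi * ‖ρ'‖ ^ 2 * (Real.cosh β / Real.sinh β))) *
    ∫ ρ : Plane,
      Complex.exp (-(Complex.I * Real.pi * ‖ρ‖ ^ 2 * (Real.cosh β / Real.sinh β))) *
      Complex.exp (2 * Real.pi * Complex.I * ⟪ρ', ρ⟫ / Real.sinh β) * f ρ

/-- Hyperbolic fractional-order Fourier transformation of the second kind of order `β`. -/
def fracK (β : ℝ) (f : Plane → ℂ) (ρ' : Plane) : ℂ :=
  Complex.I * Real.exp β / Real.cosh β *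
    Complex.exp (Complex.I * Real.pi * ‖ρ'‖ ^ 2 * Real.tanh β) *
    ∫ ρ : Plane,
      Complex.exp (-(Complex.I * Real.pi * ‖ρ‖ ^ 2 * Real.tanh β)) *
      Complex.exp (2 * Real.pi * Complex.I * ⟪ρ', ρ⟫ / Real.cosh β) * f ρ

/-!
The integral defining `H_β` or `K_β` is the linear canonical transform of a matrix in `SL(2, ℝ)`:
multiply by a chirp, take the Fourier transform, rescale, and multiply by another chirp. Composing
two such transforms pairs the inner Fourier transform with a chirp `exp (-b * ‖x‖ ^ 2)`, `b`
imaginary. For `0 < b.re` this pairing is evaluated by moving the Fourier transform onto the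
Gaussian, and both sides are continuous up to `b.re = 0`. Hence transforms compose, up to a
constant, as their matrices multiply, and the addition formulas say that the matrices of `K_{β'}`
and `H_β` multiply to that of `K_{β'+β}`.
-/

open scoped FourierTransform Real MatrixGroups
open Module (finrank)

lemma iteratedDeriv_cexp_ofReal_mul_const (c : ℂ) (n : ℕ) :
    iteratedDeriv n (fun t : ℝ => Complex.exp (t * c)) =
      fun t : ℝ => c ^ n * Complex.exp (t * c) := by
  induction n with
  | zero => simp
  | succ n ih =>
    funext t
    have hderiv : HasDerivAt (fun t : ℝ => Complex.exp (t * c)) (Complex.exp (t * c) * (1 * c)) t :=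
      ((hasDerivAt_id (t : ℂ)).mul_const c).cexp.comp_ofReal
    rw [iteratedDeriv_succ, ih, (hderiv.const_mul (c ^ n)).deriv]
    ring

lemma hasTemperateGrowth_cexp_ofReal_mul_I :
    (fun t : ℝ => Complex.exp (t * Complex.I)).HasTemperateGrowth := by
  refine ⟨(Complex.ofRealCLM.contDiff.mul contDiff_const).cexp, fun n => ⟨0, 1, fun t => ?_⟩⟩
  rw [norm_iteratedFDeriv_eq_norm_iteratedDeriv, iteratedDeriv_cexp_ofReal_mul_const]
  simp [Complex.norm_exp_ofReal_mul_I]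

lemma ofReal_div_mem_slitPlane {t : ℝ} (ht : 0 < t) {b : ℂ} (hb : 0 ≤ b.re) (hb₀ : b ≠ 0) :
    t / b ∈ Complex.slitPlane := by
  have hnormSq : 0 < Complex.normSq b := Complex.normSq_pos.mpr hb₀
  rw [Complex.mem_slitPlane_iff, div_eq_mul_inv, Complex.re_ofReal_mul, Complex.im_ofReal_mul,
    Complex.inv_re, Complex.inv_im]
  rcases hb.lt_or_eq with hre | hre
  · exact .inl (by positivity)
  · have him : b.im ≠ 0 := fun him => hb₀ (Complex.ext hre.symm him)
    exact .inr (mul_ne_zero ht.ne' (div_ne_zero (neg_ne_zero.mpr him) hnormSq.ne'))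

lemma mul_apply_zero_zero_div {M M' : SL(2, ℝ)} (hM : M 0 1 ≠ 0) (hMM' : (M' * M) 0 1 ≠ 0) :
    (M' * M) 0 0 / (M' * M) 0 1 = M 0 0 / M 0 1 - M' 0 1 / (M 0 1 * (M' * M) 0 1) := by
  have hdet : M 0 0 * M 1 1 - M 0 1 * M 1 0 = 1 := (Matrix.det_fin_two _).symm.trans M.det_coe
  field_simp
  simp only [Matrix.SpecialLinearGroup.coe_mul, Matrix.mul_apply, Fin.sum_univ_two]
  linear_combination -M' 0 1 * hdet

lemma mul_apply_one_one_div {M M' : SL(2, ℝ)} (hM' : M' 0 1 ≠ 0) (hMM' : (M' * M) 0 1 ≠ 0) :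
    (M' * M) 1 1 / (M' * M) 0 1 = M' 1 1 / M' 0 1 - M 0 1 / (M' 0 1 * (M' * M) 0 1) := by
  have hdet : M' 0 0 * M' 1 1 - M' 0 1 * M' 1 0 = 1 :=
    (Matrix.det_fin_two _).symm.trans M'.det_coe
  field_simp
  simp only [Matrix.SpecialLinearGroup.coe_mul, Matrix.mul_apply, Fin.sum_univ_two]
  linear_combination -M 0 1 * hdet

section NormedAddCommGroup

variable {V : Type*} [NormedAddCommGroup V]

lemma norm_cexp_neg_sq_norm_div_le_one {b : ℂ} (hb : 0 ≤ b.re) (x : V) :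
    ‖Complex.exp (-π ^ 2 * ‖x‖ ^ 2 / b)‖ ≤ 1 := by
  have hre : (-π ^ 2 * ‖x‖ ^ 2 / b : ℂ).re = -(π ^ 2 * ‖x‖ ^ 2 * (b.re / Complex.normSq b)) := by
    rw [← Complex.inv_re, ← Complex.re_ofReal_mul, ← Complex.neg_re]
    push_cast
    ring_nf
  have := Complex.normSq_nonneg b
  rw [Complex.norm_exp, hre, Real.exp_le_one_iff, neg_nonpos]
  positivity

/-- The chirp of rate `t`, by which linear canonical transforms multiply before and after the
Fourier transform. -/
def chirp (t : ℝ) (x : V) : ℂ :=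
  Complex.exp ((π * t * ‖x‖ ^ 2 : ℝ) * Complex.I)

lemma norm_chirp (t : ℝ) (x : V) : ‖chirp t x‖ = 1 :=
  Complex.norm_exp_ofReal_mul_I _

lemma chirp_neg_mul_chirp (t : ℝ) (x : V) : chirp (-t) x * chirp t x = 1 := by
  rw [chirp, chirp, ← Complex.exp_add, Complex.exp_eq_one_iff]
  exact ⟨0, by push_cast; ring⟩

lemma continuous_chirp (t : ℝ) : Continuous (chirp t : V → ℂ) := by
  unfold chirp
  fun_prop

lemma integrable_chirp_mul_iff [MeasurableSpace V] [OpensMeasurableSpace V] {μ : Measure V} {t : ℝ}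
    {f : V → ℂ} : Integrable (fun x => chirp t x * f x) μ ↔ Integrable f μ := by
  have hmul {s : ℝ} {h : V → ℂ} (hh : Integrable h μ) : Integrable (fun x => chirp s x * h x) μ :=
    hh.bdd_mul (c := 1) (continuous_chirp s).aestronglyMeasurable
      (.of_forall fun x => (norm_chirp s x).le)
  refine ⟨fun hf => (hmul (s := -t) hf).congr (.of_forall fun x => ?_), hmul⟩
  simp only [← mul_assoc, chirp_neg_mul_chirp, one_mul]

end NormedAddCommGroup

section InnerProductSpace

variable {V : Type*} [NormedAddCommGroup V] [InnerProductSpace ℝ V]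

lemma norm_cexp_neg_mul_sq_norm_add_le_one {b : ℂ} (hb : 0 ≤ b.re) (w x : V) :
    ‖Complex.exp (-b * ‖x‖ ^ 2 + 2 * π * Complex.I * ⟪w, x⟫)‖ ≤ 1 := by
  have hre : (-b * ‖x‖ ^ 2 + 2 * π * Complex.I * ⟪w, x⟫ : ℂ).re = -(b.re * ‖x‖ ^ 2) := by
    simp [← Complex.ofReal_pow]
  rw [Complex.norm_exp, hre, Real.exp_le_one_iff, neg_nonpos]
  positivity

lemma hasTemperateGrowth_chirp (t : ℝ) : (chirp t : V → ℂ).HasTemperateGrowth :=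
  hasTemperateGrowth_cexp_ofReal_mul_I.comp
    ((Function.HasTemperateGrowth.const (π * t)).mul (Function.hasTemperateGrowth_norm_sq V))

/-- The kernel of the linear canonical transform attached to `M = !![a, b; c, d]`, for `b ≠ 0`. -/
def canonicalKernel (M : SL(2, ℝ)) (x' x : V) : ℂ :=
  Complex.exp
    ((π * (M 0 0 * ‖x‖ ^ 2 - 2 * ⟪x', x⟫ + M 1 1 * ‖x'‖ ^ 2) / M 0 1 : ℝ) * Complex.I)

lemma canonicalKernel_eq_chirp_mul (M : SL(2, ℝ)) (x' x : V) :
    canonicalKernel M x' x = chirp (M 1 1 / M 0 1) x' *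
      (Complex.exp (2 * π * Complex.I * ⟪-(M 0 1)⁻¹ • x', x⟫) * chirp (M 0 0 / M 0 1) x) := by
  simp only [canonicalKernel, chirp, ← Complex.exp_add, real_inner_smul_left]
  congr 1
  push_cast
  ring

/-- The Gaussian exponent that arises when the transform of `M'` is applied after that of `M`: the
two chirps in the intermediate variable `x` multiply to `exp (-b * ‖x‖ ^ 2)`, where `b` is this
purely imaginary number. -/
def intermediateExponent (M' M : SL(2, ℝ)) : ℂ :=
  -(π * (M' 0 0 / M' 0 1 + M 1 1 / M 0 1 : ℝ) * Complex.I)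

lemma intermediateExponent_re (M' M : SL(2, ℝ)) : (intermediateExponent M' M).re = 0 := by
  rw [intermediateExponent, ← Complex.ofReal_mul, Complex.neg_re, Complex.re_ofReal_mul,
    Complex.I_re, mul_zero, neg_zero]

lemma div_intermediateExponent {M M' : SL(2, ℝ)} (hM : M 0 1 ≠ 0) (hM' : M' 0 1 ≠ 0) (s : ℝ) :
    s / intermediateExponent M' M =
      Complex.I * (s * (M 0 1 * M' 0 1 / (M' * M) 0 1) / π : ℝ) := by
  have hsum : M' 0 0 / M' 0 1 + M 1 1 / M 0 1 = (M' * M) 0 1 / (M 0 1 * M' 0 1) := by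
    simp only [Matrix.SpecialLinearGroup.coe_mul, Matrix.mul_apply, Fin.sum_univ_two]
    field_simp
  rw [intermediateExponent, hsum, div_eq_mul_inv, inv_neg, mul_inv, Complex.inv_I, mul_inv,
    ← Complex.ofReal_inv, ← Complex.ofReal_inv, inv_div]
  push_cast
  ring

lemma canonicalKernel_mul_chirp_eq_chirp_mul_gaussian (M M' : SL(2, ℝ)) (x'' x : V) :
    canonicalKernel M' x'' x * chirp (M 1 1 / M 0 1) x =
      chirp (M' 1 1 / M' 0 1) x'' * Complex.exp (-intermediateExponent M' M * ‖x‖ ^ 2 +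
        2 * π * Complex.I * ⟪-(M' 0 1)⁻¹ • x'', x⟫) := by
  rw [canonicalKernel_eq_chirp_mul, mul_assoc, mul_assoc]
  simp only [chirp, ← Complex.exp_add, intermediateExponent]
  congr 2
  push_cast
  ring

lemma chirp_mul_gaussian_mul_chirp_eq_canonicalKernel {M M' : SL(2, ℝ)} (hM : M 0 1 ≠ 0)
    (hM' : M' 0 1 ≠ 0) (hMM' : (M' * M) 0 1 ≠ 0) (x'' x : V) :
    chirp (M' 1 1 / M' 0 1) x'' *
        (Complex.exp
            (-π ^ 2 * ‖-(M' 0 1)⁻¹ • x'' - (M 0 1)⁻¹ • x‖ ^ 2 / intermediateExponent M' M) *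
          chirp (M 0 0 / M 0 1) x) =
      canonicalKernel (M' * M) x'' x := by
  have hnorm : ‖-(M' 0 1)⁻¹ • x'' - (M 0 1)⁻¹ • x‖ ^ 2 =
      ‖x''‖ ^ 2 / M' 0 1 ^ 2 + 2 * ⟪x'', x⟫ / (M' 0 1 * M 0 1) + ‖x‖ ^ 2 / M 0 1 ^ 2 := by
    rw [norm_sub_sq_real, norm_smul, norm_smul, mul_pow, mul_pow, real_inner_smul_left,
      real_inner_smul_right, Real.norm_eq_abs, Real.norm_eq_abs, sq_abs, sq_abs]
    field_simp
    ring
  have hgauss := div_intermediateExponent hM hM'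
    (-π ^ 2 * ‖-(M' 0 1)⁻¹ • x'' - (M 0 1)⁻¹ • x‖ ^ 2)
  rw [Complex.ofReal_mul, Complex.ofReal_neg, Complex.ofReal_pow, Complex.ofReal_pow] at hgauss
  rw [hgauss, hnorm, mul_comm Complex.I]
  simp only [chirp, canonicalKernel, ← Complex.exp_add, ← add_mul, ← Complex.ofReal_add]
  congr 3
  calc _ = π * ((M 0 0 / M 0 1 - M' 0 1 / (M 0 1 * (M' * M) 0 1)) * ‖x‖ ^ 2 -
        2 * ⟪x'', x⟫ / (M' * M) 0 1 +
        (M' 1 1 / M' 0 1 - M 0 1 / (M' 0 1 * (M' * M) 0 1)) * ‖x''‖ ^ 2) := by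
        field_simp
        ring
    _ = _ := by
      rw [← mul_apply_zero_zero_div hM hMM', ← mul_apply_one_one_div hM' hMM']
      ring

variable [MeasurableSpace V] [BorelSpace V] [FiniteDimensional ℝ V]

lemma integral_mul_fourier_smul {f g : V → ℂ} (hf : Integrable f) (hg : Integrable g) (r : ℝ) :
    ∫ x, f x * 𝓕 g (r • x) = ∫ y, 𝓕 f (r • y) * g y := by
  have hL : Continuous fun p : V × V => (r • innerₗ V) p.1 p.2 := by
    simp only [LinearMap.smul_apply, innerₗ_apply_apply]
    fun_prop
  have hfourier (h : V → ℂ) (x : V) :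
      VectorFourier.fourierIntegral 𝐞 volume (r • innerₗ V) h x = 𝓕 h (r • x) := by
    simp [VectorFourier.fourierIntegral, Real.fourier_eq, inner_smul_right]
  have hflip : (r • innerₗ V).flip = r • innerₗ V := by
    ext x y
    simp [real_inner_comm]
  have hswap := VectorFourier.integral_fourierIntegral_smul_eq_flip
    Real.continuous_fourierChar hL hf hg
  simpa only [hflip, hfourier, smul_eq_mul] using hswap.symm

lemma integral_gaussian_mul_fourier_smul {b : ℂ} (hb : 0 < b.re) (w : V) (r : ℝ) {g : V → ℂ}
    (hg : Integrable g) :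
    ∫ x, Complex.exp (-b * ‖x‖ ^ 2 + 2 * π * Complex.I * ⟪w, x⟫) * 𝓕 g (r • x) =
      (π / b) ^ (finrank ℝ V / 2 : ℂ) *
        ∫ y, Complex.exp (-π ^ 2 * ‖w - r • y‖ ^ 2 / b) * g y := by
  have hgauss := GaussianFourier.integrable_cexp_neg_mul_sq_norm_add hb (2 * π * Complex.I) w
  simp only [integral_mul_fourier_smul hgauss hg, fourier_gaussian_innerProductSpace' hb,
    mul_assoc _ (Complex.exp _), integral_const_mul]

lemma continuousOn_integral_gaussian_mul (w : V) {h : V → ℂ} (hh : Integrable h) :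
    ContinuousOn
      (fun b : ℂ => ∫ x, Complex.exp (-b * ‖x‖ ^ 2 + 2 * π * Complex.I * ⟪w, x⟫) * h x)
      {b | 0 ≤ b.re} := by
  refine continuousOn_of_dominated (fun b _ => ?_) (fun b hb => .of_forall fun x => ?_) hh.norm
    (.of_forall fun x => Continuous.continuousOn (by fun_prop))
  · exact (Continuous.aestronglyMeasurable (by fun_prop)).mul hh.aestronglyMeasurable
  · rw [norm_mul]
    exact mul_le_of_le_one_left (norm_nonneg _) (norm_cexp_neg_mul_sq_norm_add_le_one hb w x)

lemma continuousOn_integral_gaussian_div_mul (w : V) (r : ℝ) {g : V → ℂ} (hg : Integrable g) :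
    ContinuousOn
      (fun b : ℂ => ∫ y, Complex.exp (-π ^ 2 * ‖w - r • y‖ ^ 2 / b) * g y)
      {b | 0 ≤ b.re ∧ b ≠ 0} := by
  refine continuousOn_of_dominated (fun b _ => ?_) (fun b hb => .of_forall fun y => ?_) hg.norm
    (.of_forall fun y => ?_)
  · exact (Continuous.aestronglyMeasurable (by fun_prop)).mul hg.aestronglyMeasurable
  · rw [norm_mul]
    exact mul_le_of_le_one_left (norm_nonneg _) (norm_cexp_neg_sq_norm_div_le_one hb.1 _)
  · exact (continuousOn_const.div continuousOn_id fun b hb => hb.2).cexp.mul continuousOn_const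

lemma integral_gaussian_mul_fourier_smul_of_nonneg {b : ℂ} (hb : 0 ≤ b.re) (hb₀ : b ≠ 0) (w : V)
    {r : ℝ} {g : V → ℂ} (hg : Integrable g) (hFg : Integrable fun x => 𝓕 g (r • x)) :
    ∫ x, Complex.exp (-b * ‖x‖ ^ 2 + 2 * π * Complex.I * ⟪w, x⟫) * 𝓕 g (r • x) =
      (π / b) ^ (finrank ℝ V / 2 : ℂ) *
        ∫ y, Complex.exp (-π ^ 2 * ‖w - r • y‖ ^ 2 / b) * g y := by
  have hcpow : ContinuousOn (fun b : ℂ => (π / b) ^ (finrank ℝ V / 2 : ℂ))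
      {b | 0 ≤ b.re ∧ b ≠ 0} :=
    (continuousOn_const.div continuousOn_id fun b hb => hb.2).cpow continuousOn_const
      fun b hb => ofReal_div_mem_slitPlane Real.pi_pos hb.1 hb.2
  have hsub : {b : ℂ | 0 < b.re} ⊆ {b | 0 ≤ b.re ∧ b ≠ 0} :=
    fun b (hb : 0 < b.re) => ⟨hb.le, fun h => hb.ne' (by rw [h, Complex.zero_re])⟩
  have hclosure : {b : ℂ | 0 ≤ b.re ∧ b ≠ 0} ⊆ closure {b | 0 < b.re} :=
    fun b hb => (Complex.closure_setOfPred_lt_re 0).ge hb.1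
  exact Set.EqOn.of_subset_closure (s := {b : ℂ | 0 < b.re})
    (fun b hb => integral_gaussian_mul_fourier_smul hb w r hg)
    ((continuousOn_integral_gaussian_mul w hFg).mono fun b hb => hb.1)
    (hcpow.mul (continuousOn_integral_gaussian_div_mul w r hg)) hsub hclosure ⟨hb, hb₀⟩

/-- The linear canonical transform attached to `M = !![a, b; c, d]`, for `b ≠ 0`. It is
unnormalised: the usual factor `(I * b) ^ (-n / 2)` is left out, since its sign is ambiguous in odd
dimension `n`. -/
def canonicalTransform (M : SL(2, ℝ)) (f : V → ℂ) (x' : V) : ℂ :=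
  ∫ x, canonicalKernel M x' x * f x

lemma canonicalTransform_eq_chirp_mul_fourier (M : SL(2, ℝ)) (f : V → ℂ) (x' : V) :
    canonicalTransform M f x' = chirp (M 1 1 / M 0 1) x' *
      𝓕 (fun x => chirp (M 0 0 / M 0 1) x * f x) ((M 0 1)⁻¹ • x') := by
  rw [canonicalTransform, Real.fourier_eq', ← integral_const_mul]
  congr with x
  rw [canonicalKernel_eq_chirp_mul, mul_assoc, mul_assoc, smul_eq_mul]
  congr 3
  rw [neg_smul, inner_neg_left, real_inner_comm]
  push_cast
  ring

lemma canonicalTransform_const_mul (M : SL(2, ℝ)) (c : ℂ) (f : V → ℂ) (x' : V) :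
    canonicalTransform M (fun x => c * f x) x' = c * canonicalTransform M f x' := by
  simp only [canonicalTransform, mul_left_comm _ c, integral_const_mul]

lemma integrable_canonicalTransform (f : SchwartzMap V ℂ) {M : SL(2, ℝ)} (hM : M 0 1 ≠ 0) :
    Integrable (canonicalTransform M f) := by
  let g : SchwartzMap V ℂ := SchwartzMap.smulLeftCLM ℂ (chirp (M 0 0 / M 0 1)) f
  have hg : ⇑g = fun x => chirp (M 0 0 / M 0 1) x * f x :=
    funext fun x => SchwartzMap.smulLeftCLM_apply_apply (hasTemperateGrowth_chirp _) f x
  simp only [funext (canonicalTransform_eq_chirp_mul_fourier M f), ← hg, ← SchwartzMap.fourier_coe]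
  exact integrable_chirp_mul_iff.mpr ((𝓕 g).integrable.comp_smul (inv_ne_zero hM))

theorem canonicalTransform_canonicalTransform {M M' : SL(2, ℝ)} (hM : M 0 1 ≠ 0)
    (hM' : M' 0 1 ≠ 0) (hMM' : (M' * M) 0 1 ≠ 0) {f : V → ℂ} (hf : Integrable f)
    (hMf : Integrable (canonicalTransform M f)) (x'' : V) :
    canonicalTransform M' (canonicalTransform M f) x'' =
      (Complex.I * (M 0 1 * M' 0 1 / (M' * M) 0 1 : ℝ)) ^ (finrank ℝ V / 2 : ℂ) *
        canonicalTransform (M' * M) f x'' := by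
  have hwidth : π / intermediateExponent M' M =
      Complex.I * (M 0 1 * M' 0 1 / (M' * M) 0 1 : ℝ) := by
    rw [div_intermediateExponent hM hM', mul_div_cancel_left₀ _ Real.pi_ne_zero]
  have hb₀ : intermediateExponent M' M ≠ 0 := by
    intro h
    rw [h, div_zero, eq_comm, mul_eq_zero, Complex.ofReal_eq_zero] at hwidth
    exact hwidth.elim Complex.I_ne_zero (div_ne_zero (mul_ne_zero hM hM') hMM')
  let g : V → ℂ := fun x => chirp (M 0 0 / M 0 1) x * f x
  have hg : Integrable g := integrable_chirp_mul_iff.mpr hf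
  have hMf_eq : canonicalTransform M f = fun x => chirp (M 1 1 / M 0 1) x * 𝓕 g ((M 0 1)⁻¹ • x) :=
    funext (canonicalTransform_eq_chirp_mul_fourier M f)
  have hFg : Integrable fun x => 𝓕 g ((M 0 1)⁻¹ • x) :=
    integrable_chirp_mul_iff.mp (hMf_eq ▸ hMf)
  calc
    _ = chirp (M' 1 1 / M' 0 1) x'' *
          ∫ x, Complex.exp (-intermediateExponent M' M * ‖x‖ ^ 2 +
            2 * π * Complex.I * ⟪-(M' 0 1)⁻¹ • x'', x⟫) * 𝓕 g ((M 0 1)⁻¹ • x) := by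
      rw [hMf_eq, canonicalTransform]
      simp only [← mul_assoc, ← integral_const_mul,
        canonicalKernel_mul_chirp_eq_chirp_mul_gaussian]
    _ = (π / intermediateExponent M' M) ^ (finrank ℝ V / 2 : ℂ) *
          ∫ y, chirp (M' 1 1 / M' 0 1) x'' *
            (Complex.exp (-π ^ 2 * ‖-(M' 0 1)⁻¹ • x'' - (M 0 1)⁻¹ • y‖ ^ 2 /
              intermediateExponent M' M) * chirp (M 0 0 / M 0 1) y) * f y := by
      rw [integral_gaussian_mul_fourier_smul_of_nonneg (intermediateExponent_re M' M).ge hb₀ _ hg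
        hFg, mul_left_comm, ← integral_const_mul]
      simp only [g, mul_assoc]
    _ = _ := by
      simp only [hwidth, chirp_mul_gaussian_mul_chirp_eq_canonicalKernel hM hM' hMM',
        canonicalTransform]

end InnerProductSpace

/-- The matrix whose linear canonical transform is `fracH β` up to a constant. -/
def fracHMatrix (β : ℝ) : SL(2, ℝ) :=
  ⟨!![Real.cosh β, -Real.sinh β; -Real.sinh β, Real.cosh β], by
    rw [Matrix.det_fin_two_of]
    linear_combination Real.cosh_sq_sub_sinh_sq β⟩

/-- The matrix whose linear canonical transform is `fracK β` up to a constant. -/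
def fracKMatrix (β : ℝ) : SL(2, ℝ) :=
  ⟨!![Real.sinh β, -Real.cosh β; Real.cosh β, -Real.sinh β], by
    rw [Matrix.det_fin_two_of]
    linear_combination Real.cosh_sq_sub_sinh_sq β⟩

lemma coe_fracHMatrix (β : ℝ) :
    (fracHMatrix β : Matrix (Fin 2) (Fin 2) ℝ) =
      !![Real.cosh β, -Real.sinh β; -Real.sinh β, Real.cosh β] :=
  rfl

lemma coe_fracKMatrix (β : ℝ) :
    (fracKMatrix β : Matrix (Fin 2) (Fin 2) ℝ) =
      !![Real.sinh β, -Real.cosh β; Real.cosh β, -Real.sinh β] :=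
  rfl

lemma fracHMatrix_zero_one_ne_zero {β : ℝ} (hβ : β ≠ 0) : fracHMatrix β 0 1 ≠ 0 :=
  neg_ne_zero.mpr (Real.sinh_ne_zero.mpr hβ)

lemma fracKMatrix_zero_one_ne_zero (β : ℝ) : fracKMatrix β 0 1 ≠ 0 :=
  neg_ne_zero.mpr (Real.cosh_pos β).ne'

lemma fracKMatrix_mul_fracHMatrix (β' β : ℝ) :
    fracKMatrix β' * fracHMatrix β = fracKMatrix (β' + β) := by
  ext i j
  rw [Matrix.SpecialLinearGroup.coe_mul, coe_fracKMatrix, coe_fracHMatrix, coe_fracKMatrix,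
    Matrix.mul_fin_two, Real.sinh_add, Real.cosh_add]
  fin_cases i <;> fin_cases j <;> dsimp <;> ring

lemma fracH_eq_mul_canonicalTransform (β : ℝ) (f : Plane → ℂ) (x : Plane) :
    fracH β f x =
      Complex.I * Real.exp β / Real.sinh β * canonicalTransform (fracHMatrix β) f x := by
  rw [fracH, canonicalTransform, mul_assoc, ← integral_const_mul]
  congr with y
  simp only [canonicalKernel, ← mul_assoc, ← Complex.exp_add]
  congr 2
  simp only [coe_fracHMatrix, Matrix.of_apply, Matrix.cons_val_zero, Matrix.cons_val_one]
  push_cast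
  ring

lemma fracK_eq_mul_canonicalTransform (β : ℝ) (f : Plane → ℂ) (x : Plane) :
    fracK β f x =
      Complex.I * Real.exp β / Real.cosh β * canonicalTransform (fracKMatrix β) f x := by
  rw [fracK, canonicalTransform, mul_assoc, ← integral_const_mul]
  congr with y
  simp only [canonicalKernel, ← mul_assoc, ← Complex.exp_add, Real.tanh_eq_sinh_div_cosh]
  congr 2
  simp only [coe_fracKMatrix, Matrix.of_apply, Matrix.cons_val_zero, Matrix.cons_val_one]
  push_cast
  ring

lemma integrable_fracH {β : ℝ} (hβ : β ≠ 0) (f : SchwartzMap Plane ℂ) :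
    Integrable (fracH β f) := by
  rw [funext (fracH_eq_mul_canonicalTransform β f)]
  exact (integrable_canonicalTransform f (fracHMatrix_zero_one_ne_zero hβ)).const_mul _

theorem stmt10_general {β : ℝ} (β' : ℝ) (hβ : β ≠ 0) {f : Plane → ℂ} (hf : Integrable f)
    (hHf : Integrable (fracH β f)) (ρ'' : Plane) :
    fracK β' (fracH β f) ρ'' = fracK (β' + β) f ρ'' := by
  have hmul := fracKMatrix_mul_fracHMatrix β' β
  have hsinh : (Real.sinh β : ℂ) ≠ 0 := by exact_mod_cast Real.sinh_ne_zero.mpr hβ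
  have hcosh : (Real.cosh β' : ℂ) ≠ 0 := by exact_mod_cast (Real.cosh_pos β').ne'
  have hconst : Complex.I * Real.exp β / Real.sinh β ≠ 0 :=
    div_ne_zero (mul_ne_zero Complex.I_ne_zero (by simp)) hsinh
  rw [funext (fracH_eq_mul_canonicalTransform β f)] at hHf ⊢
  rw [integrable_const_mul_iff hconst.isUnit] at hHf
  rw [fracK_eq_mul_canonicalTransform, fracK_eq_mul_canonicalTransform,
    canonicalTransform_const_mul,
    canonicalTransform_canonicalTransform (fracHMatrix_zero_one_ne_zero hβ)
      (fracKMatrix_zero_one_ne_zero β') (hmul ▸ fracKMatrix_zero_one_ne_zero _) hf hHf,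
    hmul, finrank_euclideanSpace_fin, Nat.cast_ofNat, div_self two_ne_zero, Complex.cpow_one,
    Real.exp_add]
  simp only [coe_fracHMatrix, coe_fracKMatrix, Matrix.of_apply, Matrix.cons_val_zero,
    Matrix.cons_val_one, Complex.ofReal_div, Complex.ofReal_mul, Complex.ofReal_neg]
  field_simp
  rw [Complex.I_sq]
  ring

/-- `K_{β'} ∘ H_β = K_{β'+β}` on Schwartz functions. -/
theorem stmt10 (β β' : ℝ) (hβ : β ≠ 0)
    (f : SchwartzMap Plane ℂ) (ρ'' : Plane) :
    fracK β' (fun ρ' => fracH β (⇑f) ρ') ρ'' = fracK (β' + β) (⇑f) ρ'' :=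
  stmt10_general β' hβ f.integrable (integrable_fracH hβ f) ρ''

end
end
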